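/- arXiv:1511.07846 — 8 statements merged into one kernel-verified Lean document; each statement's English description precedes it below -/
import Mathlib

section
/- For every multiset X : Multiset (κ × α), unnesting its group-by recovers X, i.e. (groupBy X).bind (fun p => p.2.map (fun v => (p.1, v))) = X. -/
/-- Group a bag of key-value pairs by key: one pair `(k, s)` for each distinct
key `k`, where `s` is the bag of values associated with `k`. -/
def groupBy {κ α : Type*} [DecidableEq κ] (X : Multiset (κ × α)) :
    Multiset (κ × Multiset α) :=
  ((X.map Prod.fst).dedup).map
    (fun k => (k, (X.filter (fun p => p.1 = k)).map Prod.snd))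

/-- Unnesting a group-by recovers the original bag. -/
theorem groupBy_unnest {κ α : Type*} [DecidableEq κ] (X : Multiset (κ × α)) :
    (groupBy X).bind (fun p => p.2.map (fun v => (p.1, v))) = X := by
  classical
  have h1 : ∀ k : κ, ((X.filter (fun p => p.1 = k)).map Prod.snd).map (fun v => (k, v))
      = X.filter (fun p => p.1 = k) := by
    intro k
    rw [Multiset.map_map]
    conv_rhs => rw [← Multiset.map_id (X.filter (fun p => p.1 = k))]
    apply Multiset.map_congr rfl
    rintro ⟨a, b⟩ h
    have := (Multiset.mem_filter.1 h).2
    simp only at this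
    simp [this]
  unfold groupBy
  rw [Multiset.bind_map]
  simp only [h1]
  ext a
  rw [Multiset.count_bind]
  change ∑ k ∈ (X.map Prod.fst).toFinset, Multiset.count a (X.filter (fun p => p.1 = k)) = _
  simp only [Multiset.count_filter]
  rw [Finset.sum_ite_eq]
  split_ifs with h
  · rfl
  · symm
    rw [Multiset.count_eq_zero]
    intro ha
    exact h (Multiset.mem_toFinset.2 (Multiset.mem_map_of_mem _ ha))
end

section
/- Let A B : Multiset (κ × Multiset α) be such that (A.map Prod.fst).Nodup and (B.map Prod.fst).Nodup. Then unnesting distributes over the full outer join with bag union: (foj (·+·) A B).bind (fun p => p.2.map (fun v => (p.1, v))) = A.bind (fun p => p.2.map (fun v => (p.1, v))) + B.bind (fun p => p.2.map (fun v => (p.1, v))). -/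
/-- Full outer join of two keyed bags: matching keys are combined with `op`,
keys occurring on only one side are kept unchanged. -/
def foj {κ α : Type*} [DecidableEq κ] (op : α → α → α)
    (X Y : Multiset (κ × α)) : Multiset (κ × α) :=
  X.bind (fun p => (Y.filter (fun q => q.1 = p.1)).map (fun q => (p.1, op p.2 q.2)))
    + X.filter (fun p => p.1 ∉ Y.map Prod.fst)
    + Y.filter (fun q => q.1 ∉ X.map Prod.fst)

theorem foj_filter_bind {β γ : Type*} (B : Multiset β) (P : β → Prop) [DecidablePred P]
    (g : β → Multiset γ) :
    (B.filter P).bind g = B.bind (fun q => if P q then g q else 0) := by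
  induction B using Multiset.induction_on with
  | empty => simp
  | cons a s ih => by_cases h : P a <;> simp [h, ih]

theorem foj_key_bind {κ β γ : Type*} [DecidableEq κ] (B : Multiset (κ × β))
    (hB : (B.map Prod.fst).Nodup) (k : κ) (c : Multiset γ) :
    B.bind (fun q => if q.1 = k then c else 0) = if k ∉ B.map Prod.fst then 0 else c := by
  induction B using Multiset.induction_on with
  | empty => simp
  | cons a s ih =>
    rw [Multiset.map_cons, Multiset.nodup_cons] at hB
    rw [Multiset.cons_bind, ih hB.2, Multiset.map_cons]
    by_cases h : a.1 = k
    · subst h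
      rw [if_pos rfl, if_pos hB.1, if_neg (by simp), add_zero]
    · have h' : k ≠ a.1 := fun e => h e.symm
      rw [if_neg h, zero_add]
      simp only [Multiset.mem_cons, h', false_or]

/-- Unnesting distributes over the full outer join with bag union,
provided the keys on each side are distinct. -/
theorem unnest_foj {κ α : Type*} [DecidableEq κ]
    (A B : Multiset (κ × Multiset α))
    (hA : (A.map Prod.fst).Nodup) (hB : (B.map Prod.fst).Nodup) :
    (foj (·+·) A B).bind (fun p => p.2.map (fun v => (p.1, v)))
      = A.bind (fun p => p.2.map (fun v => (p.1, v)))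
        + B.bind (fun p => p.2.map (fun v => (p.1, v))) := by
  set f : κ × Multiset α → Multiset (κ × α) := fun p => p.2.map (fun v => (p.1, v)) with hf
  have key : (A.bind (fun p => (B.filter (fun q => q.1 = p.1)).map
      (fun q => (p.1, p.2 + q.2)))).bind f
      = A.bind (fun p => if p.1 ∉ B.map Prod.fst then 0 else f p)
        + B.bind (fun q => if q.1 ∉ A.map Prod.fst then 0 else f q) := by
    have h1 : ∀ p : κ × Multiset α,
        ((B.filter (fun q => q.1 = p.1)).map (fun q => (p.1, p.2 + q.2))).bind f
        = (if p.1 ∉ B.map Prod.fst then 0 else f p)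
          + B.bind (fun q => if p.1 = q.1 then f q else 0) := by
      intro p
      rw [Multiset.bind_map, foj_filter_bind, ← foj_key_bind B hB p.1 (f p), ← Multiset.bind_add]
      refine Multiset.bind_congr fun q _ => ?_
      by_cases h : q.1 = p.1
      · simp [hf, h]
      · have h' : ¬ p.1 = q.1 := fun e => h e.symm
        simp [h, h']
    rw [Multiset.bind_assoc]
    simp only [h1]
    rw [Multiset.bind_add, Multiset.bind_bind A B]
    congr 1
    exact Multiset.bind_congr fun q _ => foj_key_bind A hA q.1 (f q)
  have split : ∀ (X : Multiset (κ × Multiset α)) (P : κ × Multiset α → Prop) [DecidablePred P],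
      X.bind (fun p => if P p then 0 else f p) + (X.filter P).bind f = X.bind f := by
    intro X P _
    rw [foj_filter_bind, ← Multiset.bind_add]
    refine Multiset.bind_congr fun q _ => ?_
    by_cases h : P q <;> simp [h]
  unfold foj
  rw [Multiset.add_bind, Multiset.add_bind, key,
    ← split A (fun p => p.1 ∉ B.map Prod.fst), ← split B (fun p => p.1 ∉ A.map Prod.fst)]
  abel
end

section
/- groupBy is a homomorphism from bag union to the full outer join with bag union: for all X Y : Multiset (κ × α), groupBy (X + Y) = foj (·+·) (groupBy X) (groupBy Y). -/
theorem bind_ite_aux {κ β : Type*} [DecidableEq κ] (A B : Multiset κ) (hB : B.Nodup)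
    (h : κ → κ → β) :
    A.bind (fun k => (B.filter (fun q => q = k)).map (h k)) =
      (A.filter (fun k => k ∈ B)).map (fun k => h k k) := by
  induction A using Multiset.induction_on with
  | empty => simp
  | cons a A ih =>
    rw [Multiset.cons_bind, ih, Multiset.filter_eq']
    by_cases ha : a ∈ B
    · rw [Multiset.count_eq_one_of_mem hB ha, Multiset.filter_cons_of_pos _ ha]
      simp
    · rw [Multiset.count_eq_zero_of_notMem ha, Multiset.filter_cons_of_neg _ ha]
      simp

theorem group_empty_aux {κ α : Type*} [DecidableEq κ] (X : Multiset (κ × α)) (k : κ)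
    (hk : k ∉ (X.map Prod.fst).dedup) :
    (X.filter (fun p => p.1 = k)).map Prod.snd = 0 := by
  rw [Multiset.map_eq_zero, Multiset.filter_eq_nil]
  intro p hp h
  exact hk (Multiset.mem_dedup.2 (Multiset.mem_map.2 ⟨p, hp, h⟩))

theorem keys_aux {κ : Type*} [DecidableEq κ] (S T : Multiset κ) :
    (S + T).dedup = S.dedup + T.dedup.filter (fun k => k ∉ S.dedup) := by
  refine (Multiset.Nodup.ext (Multiset.nodup_dedup _) ?_).2 ?_
  · refine Multiset.nodup_add.2 ⟨Multiset.nodup_dedup _,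
      (Multiset.nodup_dedup _).filter _, ?_⟩
    rw [Multiset.disjoint_left]
    intro a ha hb
    exact (Multiset.mem_filter.1 hb).2 ha
  · intro a
    simp only [Multiset.mem_dedup, Multiset.mem_add, Multiset.mem_filter]
    tauto

/-- `groupBy` is a homomorphism from bag union to the full outer join with bag union. -/
theorem groupBy_hom {κ α : Type*} [DecidableEq κ] (X Y : Multiset (κ × α)) :
    groupBy (X + Y) = foj (·+·) (groupBy X) (groupBy Y) := by
  have hkeys : ∀ Z : Multiset (κ × α),
      (groupBy Z).map Prod.fst = (Z.map Prod.fst).dedup := by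
    intro Z
    simp [groupBy, Multiset.map_map, Function.comp_def]
  unfold foj
  rw [hkeys, hkeys]
  unfold groupBy
  rw [Multiset.map_add, keys_aux]
  have hX := group_empty_aux X
  have hY := group_empty_aux Y
  have nB := Multiset.nodup_dedup (Y.map Prod.fst)
  generalize (X.map Prod.fst).dedup = A at *
  generalize (Y.map Prod.fst).dedup = B at *
  simp only [Multiset.bind_map, Multiset.filter_map, Multiset.map_map, Function.comp_def,
    Multiset.filter_add, Multiset.map_add]
  rw [bind_ite_aux A B nB (fun k q => (k, (X.filter (fun p => p.1 = k)).map Prod.snd +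
    (Y.filter (fun p => p.1 = q)).map Prod.snd))]
  congr 1
  · conv_lhs => rw [← Multiset.filter_add_not (fun k => k ∈ B) A, Multiset.map_add]
    congr 1
    refine Multiset.map_congr rfl fun k hk => ?_
    rw [hY k (Multiset.mem_filter.1 hk).2, add_zero]
  · refine Multiset.map_congr rfl fun k hk => ?_
    rw [hX k (Multiset.mem_filter.1 hk).2, zero_add]
end

section
/- coGroup is a homomorphism on both inputs from bag union to the full outer join with componentwise bag union: for all X₁ X₂ : Multiset (κ × α) and Y₁ Y₂ : Multiset (κ × β), coGroup (X₁ + X₂) (Y₁ + Y₂) = foj (fun s t => (s.1 + t.1, s.2 + t.2)) (coGroup X₁ Y₁) (coGroup X₂ Y₂). -/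
/-- CoGroup two keyed bags: one entry per distinct key, pairing the bag of
`X`-values with the bag of `Y`-values for that key. -/
def coGroup {κ α β : Type*} [DecidableEq κ]
    (X : Multiset (κ × α)) (Y : Multiset (κ × β)) :
    Multiset (κ × (Multiset α × Multiset β)) :=
  (((X.map Prod.fst) + (Y.map Prod.fst)).dedup).map
    (fun k => (k, ((X.filter (fun p => p.1 = k)).map Prod.snd,
                   (Y.filter (fun q => q.1 = k)).map Prod.snd)))

theorem foj_map_keys {κ γ : Type*} [DecidableEq κ] (op : γ → γ → γ)
    (K₁ K₂ : Multiset κ) (h₂ : K₂.Nodup) (g₁ g₂ : κ → γ) :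
    foj op (K₁.map (fun k => (k, g₁ k))) (K₂.map (fun k => (k, g₂ k)))
      = (K₁.filter (fun k => k ∈ K₂)).map (fun k => (k, op (g₁ k) (g₂ k)))
        + (K₁.filter (fun k => k ∉ K₂)).map (fun k => (k, g₁ k))
        + (K₂.filter (fun k => k ∉ K₁)).map (fun k => (k, g₂ k)) := by
  unfold foj
  simp only [Multiset.filter_map, Multiset.map_map, Function.comp_def, Multiset.map_id',
    Multiset.bind_map]
  congr 2
  induction K₁ using Multiset.induction_on with
  | empty => simp
  | cons a s ih =>
    rw [Multiset.cons_bind, ih]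
    rw [Multiset.filter_eq']
    by_cases ha : a ∈ K₂
    · rw [Multiset.count_eq_one_of_mem h₂ ha]
      simp [ha]
    · rw [Multiset.count_eq_zero_of_notMem ha]
      simp [ha]

theorem keys_split {κ : Type*} [DecidableEq κ] (A B C : Multiset κ) (hA : A.Nodup)
    (hB : B.Nodup) (hC : C.Nodup) (h : ∀ k, k ∈ C ↔ k ∈ A ∨ k ∈ B) :
    C = A.filter (fun k => k ∈ B) + A.filter (fun k => k ∉ B)
      + B.filter (fun k => k ∉ A) := by
  rw [Multiset.filter_add_not]
  ext k
  rw [Multiset.count_add, Multiset.count_filter, Multiset.count_eq_of_nodup hA,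
    Multiset.count_eq_of_nodup hB, Multiset.count_eq_of_nodup hC]
  have := h k
  by_cases h1 : k ∈ A <;> by_cases h2 : k ∈ B <;> simp_all

theorem filter_snd_nil {κ α : Type*} [DecidableEq κ] (X : Multiset (κ × α)) (k : κ)
    (h : k ∉ X.map Prod.fst) : X.filter (fun p => p.1 = k) = 0 := by
  rw [Multiset.filter_eq_nil]
  intro p hp e
  exact h (e ▸ Multiset.mem_map_of_mem Prod.fst hp)

/-- `coGroup` is a homomorphism on both inputs from bag union to the full outer
join with componentwise bag union. -/
theorem coGroup_hom {κ α β : Type*} [DecidableEq κ]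
    (X₁ X₂ : Multiset (κ × α)) (Y₁ Y₂ : Multiset (κ × β)) :
    coGroup (X₁ + X₂) (Y₁ + Y₂)
      = foj (fun s t => (s.1 + t.1, s.2 + t.2)) (coGroup X₁ Y₁) (coGroup X₂ Y₂) := by
  unfold coGroup
  rw [foj_map_keys _ _ _ (Multiset.nodup_dedup _)]
  rw [keys_split ((X₁.map Prod.fst) + (Y₁.map Prod.fst)).dedup
    ((X₂.map Prod.fst) + (Y₂.map Prod.fst)).dedup _ (Multiset.nodup_dedup _)
    (Multiset.nodup_dedup _) (Multiset.nodup_dedup _)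
    (by
      intro k
      simp only [Multiset.mem_dedup, Multiset.map_add, Multiset.mem_add]
      tauto)]
  rw [Multiset.map_add, Multiset.map_add]
  refine congrArg₂ _ (congrArg₂ _ ?_ ?_) ?_
  · refine Multiset.map_congr rfl fun k _ => ?_
    simp only [Multiset.filter_add, Multiset.map_add]
  · refine Multiset.map_congr rfl fun k hk => ?_
    rw [Multiset.mem_filter, Multiset.mem_dedup, Multiset.mem_dedup, Multiset.mem_add,
      Multiset.mem_add, not_or] at hk
    simp only [Multiset.filter_add, filter_snd_nil X₂ k hk.2.1, filter_snd_nil Y₂ k hk.2.2,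
      add_zero]
  · refine Multiset.map_congr rfl fun k hk => ?_
    rw [Multiset.mem_filter, Multiset.mem_dedup, Multiset.mem_dedup, Multiset.mem_add,
      Multiset.mem_add, not_or] at hk
    simp only [Multiset.filter_add, filter_snd_nil X₁ k hk.2.1, filter_snd_nil Y₁ k hk.2.2,
      zero_add]
end

section
/- Both coGroup inputs can be recovered from the coGroup result: for all X : Multiset (κ × α) and Y : Multiset (κ × β), (coGroup X Y).bind (fun p => p.2.1.map (fun x => (p.1, x))) = X and (coGroup X Y).bind (fun p => p.2.2.map (fun y => (p.1, y))) = Y. -/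
theorem bind_filter_key {κ α : Type*} [DecidableEq κ] (K : Multiset κ) (hK : K.Nodup)
    (X : Multiset (κ × α)) (h : ∀ p ∈ X, p.1 ∈ K) :
    K.bind (fun k => X.filter (fun p => p.1 = k)) = X := by
  induction X using Multiset.induction_on with
  | empty => simp
  | cons a X ih =>
    simp only [Multiset.filter_cons, Multiset.bind_add]
    rw [ih (fun p hp => h p (Multiset.mem_cons_of_mem hp))]
    obtain ⟨K', rfl⟩ := Multiset.exists_cons_of_mem (h a (Multiset.mem_cons_self a X))
    have hn := (Multiset.nodup_cons.1 hK).1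
    have h0 : K'.bind (fun k => if a.1 = k then ({a} : Multiset (κ × α)) else 0) = 0 := by
      rw [Multiset.bind_congr (g := fun _ => 0)]
      · simp
      · intro k hk
        rw [if_neg]
        rintro rfl
        exact hn hk
    rw [Multiset.cons_bind, h0]
    simp

theorem map_filter_key {κ α : Type*} [DecidableEq κ] (X : Multiset (κ × α)) (k : κ) :
    ((X.filter (fun p => p.1 = k)).map Prod.snd).map (fun x => (k, x)) =
      X.filter (fun p => p.1 = k) := by
  rw [Multiset.map_map]
  conv_rhs => rw [← Multiset.map_id (X.filter (fun p => p.1 = k))]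
  apply Multiset.map_congr rfl
  intro p hp
  have := (Multiset.mem_filter.1 hp).2
  subst this
  rfl

/-- Both coGroup inputs can be recovered from the coGroup result. -/
theorem coGroup_unnest {κ α β : Type*} [DecidableEq κ]
    (X : Multiset (κ × α)) (Y : Multiset (κ × β)) :
    (coGroup X Y).bind (fun p => p.2.1.map (fun x => (p.1, x))) = X ∧
    (coGroup X Y).bind (fun p => p.2.2.map (fun y => (p.1, y))) = Y := by
  unfold coGroup
  simp only [Multiset.bind_map, map_filter_key]
  constructor
  · apply bind_filter_key _ (Multiset.nodup_dedup _)
    intro p hp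
    exact Multiset.mem_dedup.2 (Multiset.mem_add.2 (Or.inl (Multiset.mem_map_of_mem _ hp)))
  · apply bind_filter_key _ (Multiset.nodup_dedup _)
    intro p hp
    exact Multiset.mem_dedup.2 (Multiset.mem_add.2 (Or.inr (Multiset.mem_map_of_mem _ hp)))
end

section
/- Flattening a keyed merge with a per-key additive map yields the bag union of the flattened parts (sMap2 judgment): let op : M → M → M and f : κ → M → Multiset β satisfy f k (op a b) = f k a + f k b for all k, a, b, and let X Y : Multiset (κ × M) with (X.map Prod.fst).Nodup and (Y.map Prod.fst).Nodup. Then (foj op X Y).bind (fun p => f p.1 p.2) = X.bind (fun p => f p.1 p.2) + Y.bind (fun p => f p.1 p.2). -/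
theorem aux_filter_bind {γ β : Type*} (P : γ → Prop) [DecidablePred P] (Y : Multiset γ)
    (g : γ → Multiset β) :
    (Y.filter P).bind g = Y.bind (fun q => if P q then g q else 0) := by
  induction Y using Multiset.induction_on with
  | empty => simp
  | cons a s ih =>
    by_cases h : P a
    · simp [h, ih]
    · simp [h, ih]

theorem aux_const {κ M β : Type*} [DecidableEq κ] (Y : Multiset (κ × M))
    (hY : (Y.map Prod.fst).Nodup) (k : κ) (c : Multiset β) :
    Y.bind (fun q => if q.1 = k then c else 0) = if k ∈ Y.map Prod.fst then c else 0 := by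
  induction Y using Multiset.induction_on with
  | empty => simp
  | cons a s ih =>
    rw [Multiset.map_cons, Multiset.nodup_cons] at hY
    rw [Multiset.cons_bind, ih hY.2, Multiset.map_cons]
    by_cases h : a.1 = k
    · subst h
      rw [if_pos rfl, if_neg hY.1, if_pos (Multiset.mem_cons_self _ _), add_zero]
    · have h2 : (k ∈ a.1 ::ₘ s.map Prod.fst) ↔ k ∈ s.map Prod.fst := by
        rw [Multiset.mem_cons]
        exact ⟨fun h' => h'.resolve_left (fun e => h e.symm), Or.inr⟩
      simp only [h2, if_neg h, zero_add]

theorem aux_split {γ β : Type*} (P : γ → Prop) [DecidablePred P] (X : Multiset γ)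
    (g : γ → Multiset β) :
    X.bind (fun p => if P p then g p else 0) + (X.filter (fun p => ¬ P p)).bind g
      = X.bind g := by
  rw [aux_filter_bind, ← Multiset.bind_add]
  refine Multiset.bind_congr fun p _ => ?_
  by_cases h : P p <;> simp [h]

/-- Flattening a keyed merge with a per-key additive map yields the bag union
of the flattened parts (sMap2 judgment). -/
theorem sMap2_hom {κ M β : Type*} [DecidableEq κ]
    (op : M → M → M) (f : κ → M → Multiset β)
    (hf : ∀ (k : κ) (a b : M), f k (op a b) = f k a + f k b)
    (X Y : Multiset (κ × M))
    (hX : (X.map Prod.fst).Nodup) (hY : (Y.map Prod.fst).Nodup) :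
    (foj op X Y).bind (fun p => f p.1 p.2)
      = X.bind (fun p => f p.1 p.2) + Y.bind (fun p => f p.1 p.2) := by
  have key : (X.bind (fun p => (Y.filter (fun q => q.1 = p.1)).map
        (fun q => (p.1, op p.2 q.2)))).bind (fun p => f p.1 p.2)
      = X.bind (fun p => if p.1 ∈ Y.map Prod.fst then f p.1 p.2 else 0)
        + Y.bind (fun q => if q.1 ∈ X.map Prod.fst then f q.1 q.2 else 0) := by
    have h1 : X.bind (fun p => if p.1 ∈ Y.map Prod.fst then f p.1 p.2 else 0)
        = X.bind (fun p => Y.bind (fun q => if q.1 = p.1 then f p.1 p.2 else 0)) :=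
      Multiset.bind_congr fun p _ => (aux_const Y hY p.1 _).symm
    have h2 : Y.bind (fun q => if q.1 ∈ X.map Prod.fst then f q.1 q.2 else 0)
        = X.bind (fun p => Y.bind (fun q => if p.1 = q.1 then f q.1 q.2 else 0)) := by
      rw [Multiset.bind_bind]
      exact Multiset.bind_congr fun q _ => (aux_const X hX q.1 _).symm
    rw [h1, h2, ← Multiset.bind_add, Multiset.bind_assoc]
    refine Multiset.bind_congr fun p _ => ?_
    rw [Multiset.bind_map, aux_filter_bind, ← Multiset.bind_add]
    refine Multiset.bind_congr fun q _ => ?_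
    by_cases h : q.1 = p.1
    · simp only [h, if_true, hf]
    · rw [if_neg h, if_neg h, if_neg (fun e => h e.symm), add_zero]
  rw [foj, Multiset.add_bind, Multiset.add_bind, key,
    ← aux_split (fun p : κ × M => p.1 ∈ Y.map Prod.fst) X (fun p => f p.1 p.2),
    ← aux_split (fun q : κ × M => q.1 ∈ X.map Prod.fst) Y (fun p => f p.1 p.2)]
  abel
end

section
/- A cMap over a keyed merge is a homomorphism into the full outer join of the outputs: let opM : M → M → M, opN : N → N → N, and f : κ → M → Multiset (θ × N) satisfy (i) f k (opM a b) = foj opN (f k a) (f k b) for all k, a, b, and (ii) for all k ≠ k' and all a b, no θ-key occurs both in (f k a).map Prod.fst and in (f k' b).map Prod.fst. Then for all X Y : Multiset (κ × M) with (X.map Prod.fst).Nodup and (Y.map Prod.fst).Nodup, (foj opM X Y).bind (fun p => f p.1 p.2) = foj opN (X.bind (fun p => f p.1 p.2)) (Y.bind (fun p => f p.1 p.2)). -/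
theorem foj_zero_left {κ α : Type*} [DecidableEq κ] (op : α → α → α)
    (Y : Multiset (κ × α)) : foj op 0 Y = Y := by
  simp [foj]

theorem foj_zero_right {κ α : Type*} [DecidableEq κ] (op : α → α → α)
    (X : Multiset (κ × α)) : foj op X 0 = X := by
  simp [foj]

theorem foj_single {κ α : Type*} [DecidableEq κ] (op : α → α → α) (k : κ) (a b : α) :
    foj op {(k, a)} {(k, b)} = {(k, op a b)} := by
  simp [foj, Multiset.filter_singleton]

theorem foj_add {κ α : Type*} [DecidableEq κ] (op : α → α → α)
    (A A' B B' : Multiset (κ × α))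
    (h1 : ∀ p ∈ A, ∀ q ∈ B', q.1 ≠ p.1) (h2 : ∀ p ∈ A', ∀ q ∈ B, q.1 ≠ p.1) :
    foj op (A + A') (B + B') = foj op A B + foj op A' B' := by
  have e1 : A.bind (fun p => ((B + B').filter (fun q => q.1 = p.1)).map
        (fun q => (p.1, op p.2 q.2)))
      = A.bind (fun p => (B.filter (fun q => q.1 = p.1)).map (fun q => (p.1, op p.2 q.2))) := by
    refine Multiset.bind_congr fun p hp => ?_
    rw [Multiset.filter_add, Multiset.filter_eq_nil.2 (h1 p hp), add_zero]
  have e2 : A'.bind (fun p => ((B + B').filter (fun q => q.1 = p.1)).map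
        (fun q => (p.1, op p.2 q.2)))
      = A'.bind (fun p => (B'.filter (fun q => q.1 = p.1)).map (fun q => (p.1, op p.2 q.2))) := by
    refine Multiset.bind_congr fun p hp => ?_
    rw [Multiset.filter_add, Multiset.filter_eq_nil.2 (h2 p hp), zero_add]
  have e3 : A.filter (fun p => p.1 ∉ (B + B').map Prod.fst)
      = A.filter (fun p => p.1 ∉ B.map Prod.fst) := by
    refine Multiset.filter_congr fun p hp => ?_
    have := h1 p hp
    simp only [Multiset.map_add, Multiset.mem_add, Multiset.mem_map]
    grind
  have e4 : A'.filter (fun p => p.1 ∉ (B + B').map Prod.fst)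
      = A'.filter (fun p => p.1 ∉ B'.map Prod.fst) := by
    refine Multiset.filter_congr fun p hp => ?_
    have := h2 p hp
    simp only [Multiset.map_add, Multiset.mem_add, Multiset.mem_map]
    grind
  have e5 : B.filter (fun p => p.1 ∉ (A + A').map Prod.fst)
      = B.filter (fun p => p.1 ∉ A.map Prod.fst) := by
    refine Multiset.filter_congr fun q hq => ?_
    have := fun p hp => h2 p hp q hq
    simp only [Multiset.map_add, Multiset.mem_add, Multiset.mem_map]
    grind
  have e6 : B'.filter (fun p => p.1 ∉ (A + A').map Prod.fst)
      = B'.filter (fun p => p.1 ∉ A'.map Prod.fst) := by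
    refine Multiset.filter_congr fun q hq => ?_
    have := fun p hp => h1 p hp q hq
    simp only [Multiset.map_add, Multiset.mem_add, Multiset.mem_map]
    grind
  unfold foj
  rw [Multiset.add_bind, e1, e2, Multiset.filter_add _ A A', e3, e4,
    Multiset.filter_add _ B B', e5, e6]
  abel

/-- A cMap over a keyed merge is a homomorphism into the full outer join of the
outputs, provided the per-key function is a homomorphism into the full outer
join and distinct keys never produce overlapping θ-keys. -/
theorem cMap_foj_hom {κ θ M N : Type*} [DecidableEq κ] [DecidableEq θ]
    (opM : M → M → M) (opN : N → N → N) (f : κ → M → Multiset (θ × N))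
    (hf : ∀ (k : κ) (a b : M), f k (opM a b) = foj opN (f k a) (f k b))
    (hdisj : ∀ (k k' : κ), k ≠ k' → ∀ (a b : M) (t : θ),
        t ∈ (f k a).map Prod.fst → t ∉ (f k' b).map Prod.fst) :
    ∀ X Y : Multiset (κ × M),
      (X.map Prod.fst).Nodup → (Y.map Prod.fst).Nodup →
      (foj opM X Y).bind (fun p => f p.1 p.2)
        = foj opN (X.bind (fun p => f p.1 p.2)) (Y.bind (fun p => f p.1 p.2)) := by

  intro X
  have key : ∀ (k : κ) (a : M) (Z : Multiset (κ × M)), k ∉ Z.map Prod.fst →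
      ∀ p ∈ f k a, ∀ q ∈ Z.bind (fun p => f p.1 p.2), q.1 ≠ p.1 := by
    intro k a Z hk p hp q hq e
    obtain ⟨z, hz, hqz⟩ := Multiset.mem_bind.1 hq
    have hne : k ≠ z.1 := fun h => hk (h ▸ Multiset.mem_map_of_mem Prod.fst hz)
    exact hdisj k z.1 hne a z.2 p.1 (Multiset.mem_map_of_mem Prod.fst hp)
      (e ▸ Multiset.mem_map_of_mem Prod.fst hqz)
  have key0 : ∀ (k : κ) (a : M) (Z : Multiset (κ × M)), k ∉ Z.map Prod.fst →
      ∀ p ∈ ({(k, a)} : Multiset (κ × M)), ∀ q ∈ Z, q.1 ≠ p.1 := by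
    intro k a Z hk p hp q hq e
    rw [Multiset.mem_singleton] at hp
    subst hp
    exact hk (Multiset.mem_map.2 ⟨q, hq, e⟩)
  induction X using Multiset.induction_on with
  | empty => intro Y _ _; simp [foj_zero_left]
  | cons x X ih =>
    obtain ⟨k, a⟩ := x
    intro Y hX hY
    rw [Multiset.map_cons, Multiset.nodup_cons] at hX
    obtain ⟨hkX, hX⟩ := hX
    rw [← Multiset.singleton_add]
    by_cases hk : k ∈ Y.map Prod.fst
    · obtain ⟨⟨k', b⟩, hb, rfl⟩ := Multiset.mem_map.1 hk
      obtain ⟨Y', rfl⟩ := Multiset.exists_cons_of_mem hb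
      rw [Multiset.map_cons, Multiset.nodup_cons] at hY
      obtain ⟨hkY, hY⟩ := hY
      dsimp only at hkX hkY ⊢
      rw [← Multiset.singleton_add,
        foj_add opM _ _ _ _ (key0 k' a Y' hkY)
          (fun p hp q hq => (key0 k' b X hkX q hq p hp).symm),
        foj_single, Multiset.add_bind, Multiset.add_bind, Multiset.add_bind, ih Y' hX hY]
      simp only [Multiset.singleton_bind]
      rw [foj_add opN _ _ _ _ (key k' a Y' hkY)
          (fun p hp q hq => (key k' b X hkX q hq p hp).symm), hf]
    · have h1 := foj_add opM {(k, a)} X 0 Y (key0 k a Y hk) (by simp)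
      have h2 := foj_add opN (f k a) (X.bind (fun p => f p.1 p.2)) 0
        (Y.bind (fun p => f p.1 p.2)) (key k a Y hk) (by simp)
      rw [zero_add, foj_zero_right] at h1 h2
      rw [h1, Multiset.add_bind, Multiset.add_bind, ih Y hX hY]
      simp only [Multiset.singleton_bind]
      rw [h2]
end

section
/- Applying a per-key additive map to lineage-refined groups gives the same result as applying it to the groups regrouped by the key alone: let f : κ → Multiset α → Multiset β satisfy f k 0 = 0 and f k (s + t) = f k s + f k t for all k, s, t. Then for every X : Multiset ((κ × θ) × Multiset α), X.bind (fun q => f q.1.1 q.2) = (groupBy (X.bind (fun q => q.2.map (fun a => (q.1.1, a))))).bind (fun p => f p.1 p.2). -/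
theorem aux_fiber {κ α β : Type*} [DecidableEq κ] (g : κ × α → Multiset β) (S : Finset κ)
    (Y : Multiset (κ × α)) (h : ∀ p ∈ Y, p.1 ∈ S) :
    ∑ k ∈ S, (Y.filter (fun p => p.1 = k)).bind g = Y.bind g := by
  induction Y using Multiset.induction_on with
  | empty => simp
  | cons a Y ih =>
    have h1 : ∀ k, ((a ::ₘ Y).filter (fun p => p.1 = k)).bind g
        = (if a.1 = k then g a else 0) + (Y.filter (fun p => p.1 = k)).bind g := by
      intro k
      by_cases hk : a.1 = k
      · rw [Multiset.filter_cons_of_pos (p := fun p : κ × α => p.1 = k) _ hk]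
        simp [hk]
      · rw [Multiset.filter_cons_of_neg (p := fun p : κ × α => p.1 = k) _ hk]
        simp [hk]
    rw [Finset.sum_congr rfl (fun k _ => h1 k), Finset.sum_add_distrib,
      ih (fun p hp => h p (Multiset.mem_cons_of_mem hp)), Finset.sum_ite_eq,
      if_pos (h a (Multiset.mem_cons_self a Y)), Multiset.cons_bind]

/-- Applying a per-key additive map to lineage-refined groups gives the same
result as applying it to the groups regrouped by the key alone. -/
theorem bind_lineage_groups_eq {κ θ α β : Type*} [DecidableEq κ]
    (f : κ → Multiset α → Multiset β)
    (hzero : ∀ k : κ, f k 0 = 0)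
    (hadd : ∀ (k : κ) (s t : Multiset α), f k (s + t) = f k s + f k t)
    (X : Multiset ((κ × θ) × Multiset α)) :
    X.bind (fun q => f q.1.1 q.2)
      = (groupBy (X.bind (fun q => q.2.map (fun a => (q.1.1, a))))).bind
          (fun p => f p.1 p.2) := by
  have hA : ∀ k s, f k s = s.bind (fun a => f k {a}) := by
    intro k s
    induction s using Multiset.induction_on with
    | empty => simp [hzero]
    | cons a s ih => rw [← Multiset.singleton_add, hadd, ih, Multiset.add_bind,
        Multiset.singleton_bind]
  have hL : X.bind (fun q => f q.1.1 q.2)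
      = (X.bind (fun q => q.2.map (fun a => (q.1.1, a)))).bind (fun p => f p.1 {p.2}) := by
    rw [Multiset.bind_assoc]
    refine Multiset.bind_congr fun q _ => ?_
    rw [Multiset.bind_map, hA]
  rw [hL]
  generalize X.bind (fun q => q.2.map (fun a => (q.1.1, a))) = Y
  rw [← aux_fiber (fun p => f p.1 {p.2}) (Y.map Prod.fst).toFinset Y
    (fun p hp => by
      rw [Multiset.mem_toFinset]
      exact Multiset.mem_map_of_mem _ hp)]
  rw [groupBy, Multiset.bind_map]
  change ((Y.map Prod.fst).dedup.bind _) = _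
  refine Multiset.bind_congr fun k _ => ?_
  change _ = f k _
  rw [hA k, Multiset.bind_map]
  refine Multiset.bind_congr fun p hp => ?_
  rw [(Multiset.mem_filter.1 hp).2]
end
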